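/- Let d ≥ 2, s > 1 + d/2, δ ∈ (0,1/2), and let u^{h,ω,n} be the high-frequency approximate velocity. For every r ≥ 0 there exists a constant C = C(r,s,d,δ,φ) such that for all n ≥ 1, all t ∈ ℝ, and ω ∈ {±1}, ‖u^{h,ω,n}(t,·)‖_{H^r(ℝ^d)} ≤ C n^{r−s}. -/

import Mathlib

open MeasureTheory Real Filter Finset Matrix
open scoped FourierTransform Topology

noncomputable section

abbrev Ed (d : ℕ) : Type := EuclideanSpace ℝ (Fin d)

variable {d : ℕ}

/-- The Fourier transform of a real-valued function on `ℝ^d`, as a ℂ-valued function. -/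
def FT (f : Ed d → ℝ) : Ed d → ℂ := 𝓕 (fun x => (f x : ℂ))

/-- The Fourier transform of a real-valued function on `ℝ`. -/
def FT1 (f : ℝ → ℝ) : ℝ → ℂ := 𝓕 (fun x => (f x : ℂ))

/-- The Sobolev `H^s` norm on `ℝ^d`, defined via the Fourier transform. -/
def hsNorm (s : ℝ) (f : Ed d → ℝ) : ℝ :=
  (∫ ξ : Ed d, (1 + ‖ξ‖ ^ 2) ^ s * ‖FT f ξ‖ ^ 2) ^ (1/2 : ℝ)

/-- The Sobolev `H^s` norm on `ℝ`. -/
def hsNorm1 (s : ℝ) (f : ℝ → ℝ) : ℝ :=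
  (∫ ξ : ℝ, (1 + ‖ξ‖ ^ 2) ^ s * ‖FT1 f ξ‖ ^ 2) ^ (1/2 : ℝ)

/-- Membership in the Sobolev space `H^s(ℝ^d)`. -/
def MemHs (s : ℝ) (f : Ed d → ℝ) : Prop :=
  Integrable (fun ξ : Ed d => (1 + ‖ξ‖ ^ 2) ^ s * ‖FT f ξ‖ ^ 2)

/-- `H^s` norm of a vector field (sum of the norms of the components). -/
def hsNormV (s : ℝ) (u : Ed d → Fin d → ℝ) : ℝ := ∑ j, hsNorm s (fun x => u x j)

/-- Membership of a vector field in `H^s(ℝ^d; ℝ^d)`. -/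
def MemHsV (s : ℝ) (u : Ed d → Fin d → ℝ) : Prop := ∀ j, MemHs s (fun x => u x j)

/-- Partial derivative `∂_{x_i} f`. -/
def pd (i : Fin d) (f : Ed d → ℝ) (x : Ed d) : ℝ := fderiv ℝ f x (EuclideanSpace.single i 1)

/-- Jacobian matrix `(∇u)_{ij} = ∂_{x_i} u_j`. -/
def gradM (u : Ed d → Fin d → ℝ) (x : Ed d) : Matrix (Fin d) (Fin d) ℝ :=
  Matrix.of fun i j => pd i (fun y => u y j) x

/-- Divergence of a vector field. -/
def divg (u : Ed d → Fin d → ℝ) (x : Ed d) : ℝ := ∑ i, pd i (fun y => u y i) x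

/-- Convective term `(u·∇)v`. -/
def conv (u v : Ed d → Fin d → ℝ) (x : Ed d) : Fin d → ℝ :=
  fun j => ∑ k, u x k * pd k (fun y => v y j) x

/-- The quadratic form `Q(u,v) = ∇u∇v + ∇u(∇v)^T − (∇u)^T∇v − (div u)∇v + (1/2)I(∇u:∇v)`. -/
def Qop (u v : Ed d → Fin d → ℝ) (x : Ed d) : Matrix (Fin d) (Fin d) ℝ :=
  gradM u x * gradM v x + gradM u x * (gradM v x)ᵀ - (gradM u x)ᵀ * gradM v x
    - divg u x • gradM v x
    + ((1/2 : ℝ) * ∑ i, ∑ j, gradM u x i j * gradM v x i j) • (1 : Matrix (Fin d) (Fin d) ℝ)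

/-- `R(u,v) = (div u) v + (u·∇)v`. -/
def Rop (u v : Ed d → Fin d → ℝ) (x : Ed d) : Fin d → ℝ :=
  fun j => divg u x * v x j + conv u v x j

/-- `(1−Δ)⁻¹`, the Fourier multiplier with symbol `(1+|ξ|²)⁻¹`. -/
def invHelm (f : Ed d → ℝ) (x : Ed d) : ℝ :=
  (𝓕⁻ (fun ξ : Ed d => (((1 + ‖ξ‖ ^ 2)⁻¹ : ℝ) : ℂ) * FT f ξ) x).re

/-- `P(u,v) = −(1−Δ)⁻¹[div Q(u,v) + R(u,v)]`, where `(div Q)_j = ∑_i ∂_i Q_{ij}`. -/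
def Pop (u v : Ed d → Fin d → ℝ) (x : Ed d) : Fin d → ℝ :=
  fun j => -invHelm (fun y => (∑ i, pd i (fun z => Qop u v z i j) y) + Rop u v y j) x

/-- `u` solves the Euler–Poincaré system in transport form `∂_t u + (u·∇)u = P(u,u)`
on `[0,T]`. -/
def IsEPSolution (T : ℝ) (u : ℝ → Ed d → Fin d → ℝ) : Prop :=
  ∀ t ∈ Set.Icc (0:ℝ) T, ∀ x : Ed d,
    HasDerivAt (fun τ => u τ x)
      (fun j => Pop (u t) (u t) x j - conv (u t) (u t) x j) t

/-- `u ∈ C([0,T]; H^s)`. -/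
def ContInHs (s T : ℝ) (u : ℝ → Ed d → Fin d → ℝ) : Prop :=
  (∀ t ∈ Set.Icc (0:ℝ) T, MemHsV s (u t)) ∧
  ∀ t₀ ∈ Set.Icc (0:ℝ) T,
    Tendsto (fun t => hsNormV s (fun x j => u t x j - u t₀ x j))
      (𝓝[Set.Icc (0:ℝ) T] t₀) (𝓝 0)

/-- `H^{s}` norm of `∇v` (sum over all entries of the Jacobian). -/
def gradNorm (s : ℝ) (v : Ed d → Fin d → ℝ) : ℝ :=
  ∑ i, ∑ j, hsNorm s (fun x => pd i (fun y => v y j) x)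

/-- Product of cut-offs `φ(x_2)⋯φ(x_d)`. -/
def phiTail [NeZero d] (φ : ℝ → ℝ) (x : Ed d) : ℝ :=
  ∏ i ∈ Finset.univ.erase (0 : Fin d), φ (x i)

/-- The high-frequency approximate velocity `u^{h,ω,n}`. -/
def uh [NeZero d] (s δ : ℝ) (φ : ℝ → ℝ) (ω : ℝ) (n : ℕ) (t : ℝ) (x : Ed d) : Fin d → ℝ :=
  fun j => if j = 0 then
    (n : ℝ) ^ (-(δ/2) - s) * φ (x 0 / (n : ℝ) ^ δ) * Real.sin (n * x 0 - ω * t) * phiTail φ x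
  else 0

/-- The low-frequency initial data `g_{ω,n}`. -/
def glow [NeZero d] (δ : ℝ) (Φ : ℝ → ℝ) (ω : ℝ) (n : ℕ) (x : Ed d) : Fin d → ℝ :=
  fun j => if j = 0 then ω * (n : ℝ)⁻¹ * Φ (x 0 / (n : ℝ) ^ δ) * phiTail Φ x else 0

/-- `H^s` norm of a matrix-valued function (sum of the norms of the entries). -/
def hsNormM (s : ℝ) (M : Ed d → Matrix (Fin d) (Fin d) ℝ) : ℝ :=
  ∑ i, ∑ j, hsNorm s (fun x => M x i j)

lemma weight_integrable (φ : ℝ → ℝ) (hφsm : ContDiff ℝ (⊤ : ℕ∞) φ) (hφc : HasCompactSupport φ)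
    (r : ℝ) (hr : 0 ≤ r) :
    Integrable (fun ξ : ℝ => (1 + ξ ^ 2) ^ r * ‖FT1 φ ξ‖ ^ 2) := by
  have h1 : HasCompactSupport (fun x => (φ x : ℂ)) :=
    hφc.comp_left (g := fun y : ℝ => (y : ℂ)) (by simp)
  have h2 : ContDiff ℝ (⊤ : ℕ∞) (fun x => (φ x : ℂ)) :=
    Complex.ofRealCLM.contDiff.comp hφsm
  let f : SchwartzMap ℝ ℂ := h1.toSchwartzMap h2
  have hf : FT1 φ = ⇑(𝓕 f : SchwartzMap ℝ ℂ) := by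
    rw [SchwartzMap.fourier_coe]; rfl
  obtain ⟨N, hN⟩ := exists_nat_ge r
  obtain ⟨C, hC⟩ : ∃ C : ℝ, ∀ x : ℝ, (1 + ‖x‖) ^ (N + 1) * ‖(𝓕 f) x‖ ≤ C :=
    ⟨_, fun x => by
      simpa using SchwartzMap.one_add_le_sup_seminorm_apply (𝕜 := ℝ) (m := (N + 1, 0))
        (k := N + 1) (n := 0) le_rfl le_rfl (𝓕 f) x⟩
  have hcont : Continuous (FT1 φ) := by rw [hf]; exact (𝓕 f).continuous
  refine Integrable.mono' (integrable_inv_one_add_sq.const_mul (C ^ 2)) ?_ ?_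
  · apply Continuous.aestronglyMeasurable
    refine Continuous.mul ?_ (by fun_prop)
    exact Continuous.rpow_const (by fun_prop) (fun x => Or.inr hr)
  · refine Eventually.of_forall fun x => ?_
    have hp : 0 < 1 + x ^ 2 := by positivity
    rw [Real.norm_of_nonneg (by positivity), hf, ← div_eq_mul_inv, le_div_iff₀ hp]
    have hx := hC x
    have h3 : (1 + x ^ 2) ^ r ≤ (1 + x ^ 2) ^ N := by
      rw [← Real.rpow_natCast (1 + x ^ 2) N]
      have h1x : 1 ≤ 1 + x ^ 2 := by nlinarith [sq_nonneg x]
      exact Real.rpow_le_rpow_of_exponent_le h1x hN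
    have h4 : 1 + x ^ 2 ≤ (1 + ‖x‖) ^ 2 := by
      rw [Real.norm_eq_abs]; nlinarith [sq_abs x, abs_nonneg x]
    calc (1 + x ^ 2) ^ r * ‖(𝓕 f) x‖ ^ 2 * (1 + x ^ 2)
        ≤ (1 + x ^ 2) ^ N * ‖(𝓕 f) x‖ ^ 2 * (1 + x ^ 2) := by gcongr
      _ = (1 + x ^ 2) ^ (N + 1) * ‖(𝓕 f) x‖ ^ 2 := by ring
      _ ≤ ((1 + ‖x‖) ^ 2) ^ (N + 1) * ‖(𝓕 f) x‖ ^ 2 := by gcongr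
      _ = ((1 + ‖x‖) ^ (N + 1) * ‖(𝓕 f) x‖) ^ 2 := by
        rw [mul_pow, ← pow_mul, ← pow_mul, mul_comm 2]
      _ ≤ C ^ 2 := by gcongr

lemma FT1_osc (φ : ℝ → ℝ) (hφ : Continuous φ) (hφc : HasCompactSupport φ) (A L m c ξ : ℝ)
    (hL : 0 < L) :
    ‖FT1 (fun x => A * φ (x / L) * Real.sin (m * x - c)) ξ‖ ≤
      |A| * L / 2 * (‖FT1 φ (L * (ξ - m / (2 * π)))‖ + ‖FT1 φ (L * (ξ + m / (2 * π)))‖) := by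
  have hscale : ∀ ζ : ℝ, FT1 φ (L * ζ) * L =
      ∫ v : ℝ, Complex.exp (↑(-2 * π * v * ζ) * Complex.I) * (φ (v / L) : ℂ) := by
    intro ζ
    have := Measure.integral_comp_div (fun v : ℝ =>
      Complex.exp (↑(-2 * π * v * (L * ζ)) * Complex.I) * (φ v : ℂ)) L
    rw [FT1, Real.fourier_real_eq_integral_exp_smul]
    simp only [smul_eq_mul, abs_of_pos hL] at this ⊢
    rw [mul_comm, ← Complex.real_smul, ← this]
    congr 1; ext v
    congr 4
    field_simp
  have hint : ∀ ζ : ℝ, Integrable (fun v : ℝ =>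
      Complex.exp (↑(-2 * π * v * ζ) * Complex.I) * (φ (v / L) : ℂ)) := by
    intro ζ
    apply Continuous.integrable_of_hasCompactSupport
    · fun_prop
    · apply HasCompactSupport.mul_left
      have : HasCompactSupport (fun v : ℝ => φ (v / L)) := by
        have := hφc.comp_homeomorph (Homeomorph.mulRight₀ L⁻¹ (by positivity))
        simpa [Function.comp_def, div_eq_mul_inv] using this
      exact this.comp_left (g := fun y : ℝ => (y : ℂ)) (by simp)
  have key : FT1 (fun x => A * φ (x / L) * Real.sin (m * x - c)) ξ =
      (A * Complex.I / 2 * Complex.exp (c * Complex.I)) *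
        (FT1 φ (L * (ξ + m / (2 * π))) * L) -
      (A * Complex.I / 2 * Complex.exp (-(c * Complex.I))) *
        (FT1 φ (L * (ξ - m / (2 * π))) * L) := by
    rw [hscale, hscale, ← integral_const_mul, ← integral_const_mul,
      ← integral_sub ((hint _).const_mul _) ((hint _).const_mul _),
      FT1, Real.fourier_real_eq_integral_exp_smul]
    congr 1; ext v
    have e1 : Complex.exp (↑(-2 * π * v * (ξ + m / (2 * π))) * Complex.I) =
        Complex.exp (↑(-2 * π * v * ξ) * Complex.I) * Complex.exp (-(m * v * Complex.I)) := by
      rw [← Complex.exp_add]; congr 1; push_cast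
      have : (π : ℂ) ≠ 0 := by exact_mod_cast Real.pi_ne_zero
      field_simp; ring
    have e2 : Complex.exp (↑(-2 * π * v * (ξ - m / (2 * π))) * Complex.I) =
        Complex.exp (↑(-2 * π * v * ξ) * Complex.I) * Complex.exp (m * v * Complex.I) := by
      rw [← Complex.exp_add]; congr 1; push_cast
      have : (π : ℂ) ≠ 0 := by exact_mod_cast Real.pi_ne_zero
      field_simp; ring
    have e3 : Complex.sin (m * v - c) =
        (Complex.exp (c * Complex.I) * Complex.exp (-(m * v * Complex.I)) -
          Complex.exp (-(c * Complex.I)) * Complex.exp (m * v * Complex.I)) * Complex.I / 2 := by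
      rw [Complex.sin, ← Complex.exp_add, ← Complex.exp_add]
      congr 4 <;> congr 1 <;> ring
    rw [e1, e2]
    push_cast
    rw [e3, smul_eq_mul]
    ring
  rw [key]
  refine (norm_sub_le _ _).trans (le_of_eq ?_)
  have n1 : ‖Complex.exp (-(c * Complex.I))‖ = 1 := by
    have := Complex.norm_exp_ofReal_mul_I (-c)
    simpa using this
  simp only [norm_mul, norm_div, Complex.norm_exp_ofReal_mul_I, n1, Complex.norm_real,
    Complex.norm_I, Real.norm_eq_abs, abs_of_pos hL]
  simp
  ring

lemma weight_le (n : ℕ) (hn : 1 ≤ n) (L ξ r : ℝ) (hL : 1 ≤ L) (hr : 0 ≤ r) (a : ℝ)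
    (ha : a ^ 2 ≤ (n : ℝ) ^ 2) :
    (1 + ξ ^ 2) ^ r ≤ 4 ^ r * (n : ℝ) ^ (2 * r) * (1 + (L * (ξ - a)) ^ 2) ^ r := by
  have hn' : (1 : ℝ) ≤ n := by exact_mod_cast hn
  rw [Real.rpow_mul (by positivity), ← Real.mul_rpow (by positivity) (by positivity),
    ← Real.mul_rpow (by positivity) (by positivity)]
  apply Real.rpow_le_rpow (by positivity) _ hr
  norm_num
  have h1 : (ξ - a) ^ 2 ≤ (L * (ξ - a)) ^ 2 := by
    rw [mul_pow]
    nlinarith [sq_nonneg (ξ - a), mul_nonneg (sq_nonneg (ξ - a)) (by nlinarith : 0 ≤ L ^ 2 - 1)]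
  have h2 : ξ ^ 2 ≤ 2 * a ^ 2 + 2 * (ξ - a) ^ 2 := by nlinarith [sq_nonneg (ξ - 2 * a)]
  have h3 : (1 : ℝ) ≤ (n : ℝ) ^ 2 := by nlinarith
  nlinarith [mul_nonneg (sq_nonneg (L * (ξ - a))) (by linarith : 0 ≤ (n : ℝ) ^ 2 - 1)]

lemma one_add_sum_le {ι : Type*} (t : Finset ι) (f : ι → ℝ) (hf : ∀ i, 0 ≤ f i) :
    1 + ∑ i ∈ t, f i ≤ ∏ i ∈ t, (1 + f i) := by
  classical
  induction t using Finset.induction_on with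
  | empty => simp
  | insert a t ha ih =>
    rw [Finset.sum_insert ha, Finset.prod_insert ha]
    have : 0 ≤ ∑ i ∈ t, f i := Finset.sum_nonneg fun i _ => hf i
    nlinarith [hf a, mul_nonneg (hf a) this, mul_le_mul_of_nonneg_left ih (hf a)]

lemma FT_prod (g : Fin d → ℝ → ℝ) (ξ : Ed d) :
    FT (fun x : Ed d => ∏ i, g i (x i)) ξ = ∏ i, FT1 (g i) (ξ i) := by
  simp only [FT, FT1, Real.fourier_real_eq_integral_exp_smul]
  rw [Real.fourier_eq', ← (PiLp.volume_preserving_toLp (Fin d)).integral_comp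
    (MeasurableEquiv.toLp 2 _).measurableEmbedding, ← integral_fintype_prod_volume_eq_prod]
  congr 1; ext v
  simp only [smul_eq_mul, Finset.prod_mul_distrib, ← Complex.exp_sum]
  push_cast
  congr 2
  rw [PiLp.inner_apply]
  push_cast
  simp only [← Finset.sum_mul, Finset.mul_sum]
  congr 1
  apply Finset.sum_congr rfl
  intro i _
  simp
  ring

lemma hs_prod_le (g G : Fin d → ℝ → ℝ) (M : Fin d → ℝ) (r : ℝ) (hr : 0 ≤ r)
    (hG : ∀ i, Integrable (G i)) (hgG : ∀ i ξ, (1 + ξ ^ 2) ^ r * ‖FT1 (g i) ξ‖ ^ 2 ≤ G i ξ)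
    (hM : ∀ i, ∫ ξ, G i ξ ≤ M i) :
    ∫ ξ : Ed d, (1 + ‖ξ‖ ^ 2) ^ r * ‖FT (fun x : Ed d => ∏ i, g i (x i)) ξ‖ ^ 2 ≤ ∏ i, M i := by
  have hG0 : ∀ i ξ, 0 ≤ G i ξ := fun i ξ => le_trans (by positivity) (hgG i ξ)
  have hint : Integrable (fun ξ : Ed d => ∏ i, G i (ξ i)) := by
    rw [← (PiLp.volume_preserving_toLp (Fin d)).integrable_comp_emb
      (MeasurableEquiv.toLp 2 _).measurableEmbedding]
    exact Integrable.fintype_prod hG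
  have heq : ∫ ξ : Ed d, ∏ i, G i (ξ i) = ∏ i, ∫ ξ, G i ξ := by
    rw [← (PiLp.volume_preserving_toLp (Fin d)).integral_comp
      (MeasurableEquiv.toLp 2 _).measurableEmbedding, ← integral_fintype_prod_volume_eq_prod]
  calc _ ≤ ∫ ξ : Ed d, ∏ i, G i (ξ i) := by
        apply integral_mono_of_nonneg
        · exact Eventually.of_forall fun ξ => by simp only [Pi.zero_apply]; positivity
        · exact hint
        · refine Eventually.of_forall fun ξ => ?_
          simp only [FT_prod, norm_prod, ← Finset.prod_pow]
          calc _ ≤ (∏ i, (1 + (ξ i) ^ 2)) ^ r * ∏ i, ‖FT1 (g i) (ξ i)‖ ^ 2 := by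
                gcongr
                rw [EuclideanSpace.norm_sq_eq]
                simpa using one_add_sum_le Finset.univ (fun i => (ξ i) ^ 2)
                  (fun i => sq_nonneg _)
            _ = ∏ i, ((1 + (ξ i) ^ 2) ^ r * ‖FT1 (g i) (ξ i)‖ ^ 2) := by
                rw [Finset.prod_mul_distrib, Real.finsetProd_rpow]
                intro i _; positivity
            _ ≤ _ := Finset.prod_le_prod (fun i _ => by positivity) (fun i _ => hgG i _)
    _ = _ := heq
    _ ≤ _ := Finset.prod_le_prod (fun i _ => integral_nonneg (hG0 i)) (fun i _ => hM i)

/-- `H^r` bound on the high-frequency approximate velocity: `‖u^{h,ω,n}(t)‖_{H^r} ≲ n^{r-s}`. -/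
theorem uh_hr_bound (d : ℕ) [NeZero d] (hd : 2 ≤ d) (s δ : ℝ)
    (hs : 1 + (d : ℝ) / 2 < s) (hδ1 : 0 < δ) (hδ2 : δ < 1/2)
    (φ : ℝ → ℝ) (hφsm : ContDiff ℝ (⊤ : ℕ∞) φ) (hφc : HasCompactSupport φ)
    (hφ1 : ∀ x : ℝ, |x| ≤ 1 → φ x = 1) (hφ0 : ∀ x : ℝ, 2 ≤ |x| → φ x = 0)
    (r : ℝ) (hr : 0 ≤ r) :
    ∃ C : ℝ, 0 < C ∧ ∀ n : ℕ, 1 ≤ n → ∀ t ω : ℝ, ω = 1 ∨ ω = -1 →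
      hsNormV r (uh (d := d) s δ φ ω n t) ≤ C * (n : ℝ) ^ (r - s) := by
  set W : ℝ → ℝ := fun ξ => (1 + ξ ^ 2) ^ r * ‖FT1 φ ξ‖ ^ 2 with hW
  have hWi : Integrable W := weight_integrable φ hφsm hφc r hr
  set K : ℝ := ∫ ξ, W ξ with hK
  have hK0 : 0 ≤ K := integral_nonneg fun ξ => by simp only [hW, Pi.zero_apply]; positivity
  refine ⟨(K ^ d * 4 ^ r) ^ (1/2 : ℝ) + 1, by positivity, ?_⟩
  intro n hn t ω _
  have hn' : (1 : ℝ) ≤ n := by exact_mod_cast hn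
  have hn0 : (0 : ℝ) < n := by linarith
  set A : ℝ := (n : ℝ) ^ (-(δ/2) - s) with hA
  set L : ℝ := (n : ℝ) ^ δ with hL
  have hL1 : 1 ≤ L := Real.one_le_rpow hn' hδ1.le
  have hL0 : 0 < L := by linarith
  set a : ℝ := n / (2 * π) with ha
  have ha0 : 0 ≤ a := by positivity
  have ha1 : a ≤ n := by
    rw [ha, div_le_iff₀ (by positivity)]
    nlinarith [Real.pi_gt_three]
  have ha2 : a ^ 2 ≤ (n : ℝ) ^ 2 := by gcongr
  set g : Fin d → ℝ → ℝ := fun i => if i = 0 then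
    fun x => A * φ (x / L) * Real.sin (n * x - ω * t) else φ with hg
  set B : ℝ := A ^ 2 * L ^ 2 / 2 * (4 ^ r * (n : ℝ) ^ (2 * r)) with hB
  set G : Fin d → ℝ → ℝ := fun i => if i = 0 then
    fun ξ => B * (W (L * (ξ - a)) + W (L * (ξ + a))) else W with hG
  have hi1 : Integrable (fun ξ => W (L * (ξ - a))) :=
    (hWi.comp_mul_left' hL0.ne').comp_sub_right a
  have hi2 : Integrable (fun ξ => W (L * (ξ + a))) :=
    (hWi.comp_mul_left' hL0.ne').comp_add_right a
  have hI1 : ∫ ξ, W (L * (ξ - a)) = L⁻¹ * K := by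
    rw [integral_sub_right_eq_self (fun ξ => W (L * ξ)) a, Measure.integral_comp_mul_left,
      abs_of_pos (by positivity), smul_eq_mul]
  have hI2 : ∫ ξ, W (L * (ξ + a)) = L⁻¹ * K := by
    rw [integral_add_right_eq_self (fun ξ => W (L * ξ)) a, Measure.integral_comp_mul_left,
      abs_of_pos (by positivity), smul_eq_mul]
  have hAL : A ^ 2 * L = (n : ℝ) ^ (-(2 * s)) := by
    rw [hA, hL, ← Real.rpow_natCast, ← Real.rpow_mul hn0.le, ← Real.rpow_add hn0]
    congr 1; push_cast; ring
  have hBint : B * (L⁻¹ * K + L⁻¹ * K) = K * (4 ^ r * (n : ℝ) ^ (2 * (r - s))) := by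
    have : (n : ℝ) ^ (2 * (r - s)) = A ^ 2 * L * (n : ℝ) ^ (2 * r) := by
      rw [hAL, ← Real.rpow_add hn0]; congr 1; ring
    rw [this, hB]
    field_simp
    ring
  have main := hs_prod_le g G
    (fun i => K * (if i = 0 then 4 ^ r * (n : ℝ) ^ (2 * (r - s)) else 1)) r hr ?_ ?_ ?_
  · have hprod : ∏ i : Fin d, K * (if i = 0 then 4 ^ r * (n : ℝ) ^ (2 * (r - s)) else 1) =
        K ^ d * 4 ^ r * (n : ℝ) ^ (2 * (r - s)) := by
      rw [Finset.prod_mul_distrib, Finset.prod_ite_eq' Finset.univ (0 : Fin d)]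
      simp; ring
    have hz : ∀ j : Fin d, j ≠ 0 → hsNorm r (fun x => uh (d := d) s δ φ ω n t x j) = 0 := by
      intro j hj
      have : FT (fun x : Ed d => uh (d := d) s δ φ ω n t x j) = 0 := by
        ext ξ
        simp [FT, uh, hj, Real.fourier_eq]
      rw [hsNorm, this]
      simp
    have h0 : (fun x : Ed d => uh (d := d) s δ φ ω n t x 0) =
        fun x : Ed d => ∏ i, g i (x i) := by
      ext x
      rw [← Finset.mul_prod_erase _ _ (Finset.mem_univ (0 : Fin d))]
      simp only [uh, phiTail, hg, if_true]
      congr 1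
      apply Finset.prod_congr rfl
      intro i hi
      rw [if_neg (Finset.ne_of_mem_erase hi)]
    rw [hsNormV, Finset.sum_eq_single (0 : Fin d) (fun j _ hj => hz j hj) (by simp), h0, hsNorm]
    rw [hprod] at main
    calc _ ≤ (K ^ d * 4 ^ r * (n : ℝ) ^ (2 * (r - s))) ^ (1/2 : ℝ) := by
          apply Real.rpow_le_rpow (integral_nonneg fun ξ => ?_) main (by norm_num)
          simp only [Pi.zero_apply]; positivity
      _ = (K ^ d * 4 ^ r) ^ (1/2 : ℝ) * (n : ℝ) ^ (r - s) := by
          rw [Real.mul_rpow (by positivity) (by positivity), ← Real.rpow_mul hn0.le]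
          congr 2; ring
      _ ≤ _ := by
          gcongr; linarith
  · intro i
    simp only [hG]
    split_ifs
    · exact (hi1.add hi2).const_mul B
    · exact hWi
  · intro i ξ
    simp only [hG, hg]
    split_ifs
    · have h1 := FT1_osc φ hφsm.continuous hφc A L n (ω * t) ξ hL0
      rw [← ha] at h1
      set p := ‖FT1 φ (L * (ξ - a))‖
      set q := ‖FT1 φ (L * (ξ + a))‖
      have w1 := weight_le n hn L ξ r hL1 hr a ha2
      have w2 := weight_le n hn L ξ r hL1 hr (-a) (by simpa using ha2)
      rw [sub_neg_eq_add] at w2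
      have h2 : ‖FT1 (fun x => A * φ (x / L) * Real.sin (n * x - ω * t)) ξ‖ ^ 2 ≤
          A ^ 2 * L ^ 2 / 2 * (p ^ 2 + q ^ 2) := by
        calc _ ≤ (|A| * L / 2 * (p + q)) ^ 2 := by gcongr
          _ = A ^ 2 * L ^ 2 / 4 * (p + q) ^ 2 := by rw [← sq_abs A]; ring
          _ ≤ A ^ 2 * L ^ 2 / 4 * (2 * (p ^ 2 + q ^ 2)) := by
            gcongr; nlinarith [sq_nonneg (p - q)]
          _ = _ := by ring
      calc _ ≤ (1 + ξ ^ 2) ^ r * (A ^ 2 * L ^ 2 / 2 * (p ^ 2 + q ^ 2)) := by gcongr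
        _ = A ^ 2 * L ^ 2 / 2 * ((1 + ξ ^ 2) ^ r * p ^ 2 + (1 + ξ ^ 2) ^ r * q ^ 2) := by ring
        _ ≤ A ^ 2 * L ^ 2 / 2 *
            (4 ^ r * (n : ℝ) ^ (2 * r) * (1 + (L * (ξ - a)) ^ 2) ^ r * p ^ 2 +
             4 ^ r * (n : ℝ) ^ (2 * r) * (1 + (L * (ξ + a)) ^ 2) ^ r * q ^ 2) := by gcongr
        _ = _ := by simp only [hB, hW]; ring
    · exact le_rfl
  · intro i
    simp only [hG]
    split_ifs
    · rw [integral_const_mul, integral_add hi1 hi2, hI1, hI2, hBint]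
    · simp [hK]
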